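/- For α > 0, suppose a : [0,T) → [0,∞) is nondecreasing and locally integrable, b : [0,T) → [0,∞) is nondecreasing continuous with b(t) ≤ M for a constant M, and x : [0,T) → [0,∞) is locally integrable with x(t) ≤ a(t) + b(t) ∫₀ᵗ (t−s)^{α−1} x(s) ds for all t ∈ [0,T). Then x(t) ≤ a(t)·E_α(b(t)·Γ(α)·t^α) for all t ∈ [0,T). -/

import Mathlib

open MeasureTheory

/-- The one-parameter Mittag-Leffler function E_α(z) = Σ_{k≥0} z^k/Γ(αk+1). -/
noncomputable def mittagLeffler (α z : ℝ) : ℝ :=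
  ∑' k : ℕ, z ^ k / Real.Gamma (α * k + 1)

/-!
Let `K β u = u ^ (β - 1) / Γ β` for `u > 0`. Euler's Beta integral says that these kernels form a
convolution semigroup, `K β ⋆ K γ = K (β + γ)`. Fix `t` and put `l = b t * Γ α`; by monotonicity
the nonnegative part `g` of `x` on `(0, t]` satisfies `g ≤ a t • K 1 + l • K α ⋆ g`. Substituting
this inequality into itself `n` times gives
`g ≤ a t • ∑ j ≤ n, l ^ j • K (α j + 1) + l ^ (n + 1) • K (α (n + 1)) ⋆ g`.
At the point `t` the sum is a partial sum of the series of `E_α (l * t ^ α)`. Once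
`α (n + 1) ≥ 1` the kernel in the remainder is monotone, so the remainder is at most
`l ^ (n + 1) * K (α (n + 1)) t * ∫ g`, which tends to zero by the superexponential growth of `Γ`.
All convolutions are taken with values in `ℝ≥0∞`, so that no integrability has to be tracked.
-/

open Filter Set Topology
open scoped ENNReal

lemma ofReal_integral_le_lintegral_ofReal {Ω : Type*} [MeasurableSpace Ω] {μ : Measure Ω}
    (f : Ω → ℝ) : ENNReal.ofReal (∫ ω, f ω ∂μ) ≤ ∫⁻ ω, ENNReal.ofReal (f ω) ∂μ := by
  by_cases hf : Integrable f μ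
  · calc ENNReal.ofReal (∫ ω, f ω ∂μ)
        ≤ ENNReal.ofReal (∫ ω, max (f ω) 0 ∂μ) :=
          ENNReal.ofReal_le_ofReal (integral_mono hf hf.pos_part fun _ => le_max_left _ _)
      _ = ∫⁻ ω, ENNReal.ofReal (max (f ω) 0) ∂μ :=
          ofReal_integral_eq_lintegral_ofReal hf.pos_part (ae_of_all _ fun _ => le_max_right _ _)
      _ = ∫⁻ ω, ENNReal.ofReal (f ω) ∂μ := by
          simp only [ENNReal.ofReal_max, ENNReal.ofReal_zero, zero_le, max_eq_left]
  · simp [integral_undef hf]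

lemma lintegral_eq_ofReal_abs_mul_lintegral_comp_mul_left {c : ℝ} (hc : c ≠ 0) (f : ℝ → ℝ≥0∞) :
    ∫⁻ y, f y = ENNReal.ofReal |c| * ∫⁻ y, f (c * y) := by
  conv_lhs => rw [← Real.smul_map_volume_mul_left hc]
  rw [lintegral_smul_measure, (measurableEmbedding_mulLeft₀ hc).lintegral_map, smul_eq_mul]

lemma lconvolution_mono_right {G : Type*} [Add G] [Neg G] [MeasurableSpace G] {μ : Measure G}
    (f : G → ℝ≥0∞) {g h : G → ℝ≥0∞} (hgh : g ≤ h) : f ⋆ₗ[μ] g ≤ f ⋆ₗ[μ] h :=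
  fun _ => lintegral_mono fun _ => mul_le_mul_right (hgh _) _

section LConvolution

variable {G : Type*} [AddGroup G] [MeasurableSpace G] [MeasurableAdd₂ G] [MeasurableNeg G]
  {μ : Measure G} [μ.IsAddLeftInvariant] [SFinite μ]

lemma lconvolution_add {f g : G → ℝ≥0∞} (hf : AEMeasurable f μ) (hg : AEMeasurable g μ)
    (h : G → ℝ≥0∞) : f ⋆ₗ[μ] (g + h) = f ⋆ₗ[μ] g + f ⋆ₗ[μ] h := by
  ext x
  simp only [lconvolution_def, Pi.add_apply, mul_add]
  exact lintegral_add_left' (by fun_prop) _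

lemma lconvolution_const_smul {f g : G → ℝ≥0∞} (hf : AEMeasurable f μ) (hg : AEMeasurable g μ)
    (c : ℝ≥0∞) : f ⋆ₗ[μ] (c • g) = c • (f ⋆ₗ[μ] g) := by
  ext x
  simp only [lconvolution_def, Pi.smul_apply, smul_eq_mul, mul_left_comm _ c]
  exact lintegral_const_mul'' _ (by fun_prop)

end LConvolution

lemma lconvolution_le_mul_lintegral_of_monotone {G : Type*} [AddCommGroup G] [LinearOrder G]
    [IsOrderedAddMonoid G] [MeasurableSpace G] [MeasurableAdd₂ G] [MeasurableNeg G]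
    {μ : Measure G} [μ.IsAddLeftInvariant] [μ.IsNegInvariant] {f g : G → ℝ≥0∞} (hf : Monotone f)
    (hg : AEMeasurable g μ) (hg0 : ∀ y < 0, g y = 0) (x : G) :
    (f ⋆ₗ[μ] g) x ≤ f x * ∫⁻ y, g y ∂μ := by
  rw [lconvolution_comm, lconvolution_def, ← lintegral_const_mul'' _ hg]
  refine lintegral_mono fun y => ?_
  rw [mul_comm]
  rcases lt_or_ge y 0 with hy | hy
  · simp [hg0 y hy]
  · exact mul_le_mul_left (hf (add_le_of_nonpos_left (neg_nonpos.2 hy))) _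

section MittagLeffler

variable {α : ℝ}

lemma rpow_mul_exp_neg_le_Gamma {x R : ℝ} (hx : 1 ≤ x) (hR : 0 ≤ R) :
    R ^ (x - 1) * Real.exp (-R) ≤ Real.Gamma x := by
  have hΓ := Real.GammaIntegral_convergent (zero_lt_one.trans_le hx)
  have hsub : Ioi R ⊆ Ioi 0 := Ioi_subset_Ioi hR
  calc R ^ (x - 1) * Real.exp (-R)
      = ∫ y in Ioi R, R ^ (x - 1) * Real.exp (-y) := by
        rw [integral_const_mul, integral_exp_neg_Ioi]
    _ ≤ ∫ y in Ioi R, Real.exp (-y) * y ^ (x - 1) := by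
        refine setIntegral_mono_on ((integrableOn_exp_neg_Ioi R).const_mul _)
          (hΓ.mono_set hsub) measurableSet_Ioi fun y hy => ?_
        rw [mul_comm]
        gcongr
        exact le_of_lt hy
    _ ≤ ∫ y in Ioi 0, Real.exp (-y) * y ^ (x - 1) := by
        refine setIntegral_mono_set hΓ ?_ hsub.eventuallyLE
        exact (ae_restrict_mem measurableSet_Ioi).mono fun y (hy : 0 < y) =>
          mul_nonneg (Real.exp_pos _).le (Real.rpow_nonneg hy.le _)
    _ = Real.Gamma x := (Real.Gamma_eq_integral (zero_lt_one.trans_le hx)).symm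

lemma Gamma_mul_natCast_add_one_pos (hα : 0 < α) (k : ℕ) : 0 < Real.Gamma (α * k + 1) :=
  Real.Gamma_pos_of_pos (by positivity)

lemma summable_mittagLeffler (hα : 0 < α) (z : ℝ) :
    Summable fun k : ℕ => z ^ k / Real.Gamma (α * k + 1) := by
  obtain ⟨R, hR, hzR⟩ : ∃ R : ℝ, 0 < R ∧ |z| < R ^ α :=
    ((eventually_gt_atTop 0).and ((tendsto_rpow_atTop hα).eventually_gt_atTop |z|)).exists
  have hRα : 0 < R ^ α := by positivity
  have hgeom : Summable fun k : ℕ => Real.exp R * (|z| / R ^ α) ^ k :=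
    (summable_geometric_of_lt_one (by positivity) ((div_lt_one hRα).2 hzR)).mul_left _
  refine hgeom.of_norm_bounded fun k => ?_
  have hΓ : (R ^ α) ^ k * Real.exp (-R) ≤ Real.Gamma (α * k + 1) := by
    have := rpow_mul_exp_neg_le_Gamma (le_add_of_nonneg_left (by positivity : 0 ≤ α * k)) hR.le
    rwa [add_sub_cancel_right, Real.rpow_mul_natCast hR.le] at this
  calc ‖z ^ k / Real.Gamma (α * k + 1)‖
      = |z| ^ k / Real.Gamma (α * k + 1) := by
        rw [norm_div, norm_pow, Real.norm_eq_abs,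
          Real.norm_of_nonneg (Gamma_mul_natCast_add_one_pos hα k).le]
    _ ≤ |z| ^ k / ((R ^ α) ^ k * Real.exp (-R)) := by gcongr
    _ = Real.exp R * (|z| / R ^ α) ^ k := by rw [Real.exp_neg, div_pow]; field_simp

lemma tendsto_natCast_mul_pow_div_Gamma (hα : 0 < α) (z : ℝ) :
    Tendsto (fun k : ℕ => k * (z ^ k / Real.Gamma (α * k + 1))) atTop (𝓝 0) := by
  refine squeeze_zero_norm (fun k => ?_) (summable_mittagLeffler hα (2 * |z|)).tendsto_atTop_zero
  have hk : (k : ℝ) ≤ 2 ^ k := mod_cast Nat.lt_two_pow_self.le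
  have hΓ := Gamma_mul_natCast_add_one_pos hα k
  rw [norm_mul, norm_div, norm_pow, Real.norm_natCast, Real.norm_eq_abs z,
    Real.norm_of_nonneg hΓ.le, mul_pow, mul_div_assoc]
  gcongr

lemma mittagLeffler_zero (α : ℝ) : mittagLeffler α 0 = 1 := by
  rw [mittagLeffler, tsum_eq_single 0 fun k hk => by simp [hk]]
  simp

lemma mittagLeffler_nonneg (hα : 0 < α) {z : ℝ} (hz : 0 ≤ z) : 0 ≤ mittagLeffler α z :=
  tsum_nonneg fun k => div_nonneg (pow_nonneg hz k) (Gamma_mul_natCast_add_one_pos hα k).le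

end MittagLeffler

section RiemannLiouville

/-- The Riemann–Liouville kernel `u ^ (β - 1) / Γ β` of fractional integration of order `β`,
extended by zero to `u ≤ 0` and valued in `ℝ≥0∞`, so that the fractional integral of a nonnegative
function is its convolution with the kernel. -/
noncomputable def rlKernel (β : ℝ) : ℝ → ℝ≥0∞ :=
  (Ioi 0).indicator fun u => ENNReal.ofReal (u ^ (β - 1) / Real.Gamma β)

variable {α β l t u : ℝ} {A c : ℝ≥0∞} {g : ℝ → ℝ≥0∞}

lemma rlKernel_of_pos (hu : 0 < u) :
    rlKernel β u = ENNReal.ofReal (u ^ (β - 1) / Real.Gamma β) :=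
  indicator_of_mem hu _

lemma rlKernel_of_nonpos (hu : u ≤ 0) : rlKernel β u = 0 :=
  indicator_of_notMem hu.not_gt _

lemma rlKernel_one_of_pos (hu : 0 < u) : rlKernel 1 u = 1 := by
  simp [rlKernel_of_pos hu]

@[fun_prop]
lemma measurable_rlKernel (β : ℝ) : Measurable (rlKernel β) :=
  Measurable.indicator (by fun_prop) measurableSet_Ioi

lemma monotone_rlKernel (hβ : 1 ≤ β) : Monotone (rlKernel β) := by
  intro u v huv
  rcases le_or_gt u 0 with hu | hu
  · simp [rlKernel_of_nonpos hu]
  · have := Real.Gamma_pos_of_pos (zero_lt_one.trans_le hβ)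
    rw [rlKernel_of_pos hu, rlKernel_of_pos (hu.trans_le huv)]
    gcongr

lemma rlKernel_eq_mul_rlKernel_add_one (hβ : 0 < β) (hu : 0 < u) :
    rlKernel β u = ENNReal.ofReal (β / u) * rlKernel (β + 1) u := by
  rw [rlKernel_of_pos hu, rlKernel_of_pos hu, ← ENNReal.ofReal_mul (by positivity),
    Real.Gamma_add_one hβ.ne', add_sub_cancel_right, Real.rpow_sub_one hu.ne']
  congr 1
  field_simp

lemma rlKernel_mul_rlKernel_eq_mul_betaPDF (hα : 0 < α) (hβ : 0 < β) (hu : 0 < u) (y : ℝ) :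
    rlKernel α (u * y) * rlKernel β (-(u * y) + u) =
      ENNReal.ofReal u⁻¹ * rlKernel (α + β) u * ProbabilityTheory.betaPDF α β y := by
  have hsub : -(u * y) + u = u * (1 - y) := by ring
  rcases le_or_gt y 0 with hy | hy
  · simp [ProbabilityTheory.betaPDF_eq_zero_of_nonpos hy,
      rlKernel_of_nonpos (mul_nonpos_of_nonneg_of_nonpos hu.le hy)]
  rcases le_or_gt 1 y with hy1 | hy1
  · simp [hsub, ProbabilityTheory.betaPDF_eq_zero_of_one_le hy1,
      rlKernel_of_nonpos (mul_nonpos_of_nonneg_of_nonpos hu.le (sub_nonpos.2 hy1))]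
  have h1y : 0 < 1 - y := sub_pos.2 hy1
  have := Real.Gamma_pos_of_pos hα
  have := Real.Gamma_pos_of_pos hβ
  have := Real.Gamma_pos_of_pos (add_pos hα hβ)
  rw [hsub, rlKernel_of_pos (by positivity), rlKernel_of_pos (by positivity), rlKernel_of_pos hu,
    ProbabilityTheory.betaPDF_of_pos_lt_one hy hy1, ← ENNReal.ofReal_mul (by positivity),
    ← ENNReal.ofReal_mul (by positivity), ← ENNReal.ofReal_mul (by positivity)]
  congr 1
  rw [Real.mul_rpow hu.le hy.le, Real.mul_rpow hu.le h1y.le, ProbabilityTheory.beta,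
    show α + β - 1 = (α - 1) + (β - 1) + 1 by ring, Real.rpow_add hu, Real.rpow_add hu,
    Real.rpow_one]
  field_simp

theorem rlKernel_lconvolution_rlKernel (hα : 0 < α) (hβ : 0 < β) :
    rlKernel α ⋆ₗ rlKernel β = rlKernel (α + β) := by
  ext u
  rw [lconvolution_def]
  rcases le_or_gt u 0 with hu | hu
  · rw [rlKernel_of_nonpos hu, ← lintegral_zero (μ := (volume : Measure ℝ))]
    congr 1 with y
    rcases le_or_gt y 0 with hy | hy
    · simp [rlKernel_of_nonpos hy]
    · simp [rlKernel_of_nonpos (show -y + u ≤ 0 by linarith)]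
  · have hu' : ENNReal.ofReal u * ENNReal.ofReal u⁻¹ = 1 := by
      rw [← ENNReal.ofReal_mul hu.le, mul_inv_cancel₀ hu.ne', ENNReal.ofReal_one]
    have hbeta : Measurable (ProbabilityTheory.betaPDF α β) :=
      (ProbabilityTheory.measurable_betaPDFReal α β).ennreal_ofReal
    rw [lintegral_eq_ofReal_abs_mul_lintegral_comp_mul_left hu.ne', abs_of_pos hu]
    simp_rw [rlKernel_mul_rlKernel_eq_mul_betaPDF hα hβ hu]
    rw [lintegral_const_mul _ hbeta, ProbabilityTheory.lintegral_betaPDF_eq_one hα hβ, mul_one,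
      ← mul_assoc, hu', one_mul]

lemma pow_mul_rlKernel_add_one (hl : 0 ≤ l) (ht : 0 < t) (n : ℕ) :
    ENNReal.ofReal l ^ n * rlKernel (α * n + 1) t =
      ENNReal.ofReal ((l * t ^ α) ^ n / Real.Gamma (α * n + 1)) := by
  rw [rlKernel_of_pos ht, ← ENNReal.ofReal_pow hl, ← ENNReal.ofReal_mul (by positivity),
    add_sub_cancel_right, Real.rpow_mul_natCast ht.le, mul_pow, mul_div_assoc]

lemma tsum_pow_mul_rlKernel_add_one (hα : 0 < α) (hl : 0 ≤ l) (ht : 0 < t) :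
    ∑' n : ℕ, ENNReal.ofReal l ^ n * rlKernel (α * n + 1) t =
      ENNReal.ofReal (mittagLeffler α (l * t ^ α)) := by
  simp_rw [pow_mul_rlKernel_add_one hl ht]
  refine (ENNReal.ofReal_tsum_of_nonneg (fun n => ?_) (summable_mittagLeffler hα _)).symm
  have := Gamma_mul_natCast_add_one_pos hα n
  positivity

lemma tendsto_pow_mul_rlKernel (hα : 0 < α) (hl : 0 ≤ l) (ht : 0 < t) :
    Tendsto (fun n : ℕ => ENNReal.ofReal l ^ n * rlKernel (α * n) t) atTop (𝓝 0) := by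
  have hlim := ENNReal.tendsto_ofReal
    ((tendsto_natCast_mul_pow_div_Gamma hα (l * t ^ α)).const_mul (α / t))
  rw [mul_zero, ENNReal.ofReal_zero] at hlim
  refine hlim.congr' ?_
  filter_upwards [eventually_gt_atTop 0] with n hn
  rw [rlKernel_eq_mul_rlKernel_add_one (by positivity) ht, mul_left_comm (_ ^ n),
    pow_mul_rlKernel_add_one hl ht, ← ENNReal.ofReal_mul (by positivity)]
  congr 1
  ring

lemma tendsto_pow_mul_rlKernel_lconvolution (hα : 0 < α) (hl : 0 ≤ l) (ht : 0 < t)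
    (hg : AEMeasurable g) (hg0 : ∀ s < 0, g s = 0) (hgi : ∫⁻ s, g s ≠ ∞) :
    Tendsto (fun n : ℕ => ENNReal.ofReal l ^ n * (rlKernel (α * n) ⋆ₗ g) t) atTop (𝓝 0) := by
  have hlim := ENNReal.Tendsto.mul_const (tendsto_pow_mul_rlKernel hα hl ht) (Or.inr hgi)
  rw [zero_mul] at hlim
  have hαn : ∀ᶠ n : ℕ in atTop, 1 ≤ α * n :=
    (tendsto_natCast_atTop_atTop.const_mul_atTop hα).eventually_ge_atTop 1
  refine tendsto_of_tendsto_of_tendsto_of_le_of_le' tendsto_const_nhds hlim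
    (Eventually.of_forall fun _ => zero_le) ?_
  filter_upwards [hαn] with n hn
  rw [mul_assoc]
  gcongr
  exact lconvolution_le_mul_lintegral_of_monotone (monotone_rlKernel hn) hg hg0 t

lemma rlKernel_lconvolution_le (hα : 0 < α) (hβ : 0 < β) (hg : AEMeasurable g)
    (h : g ≤ A • rlKernel 1 + c • (rlKernel α ⋆ₗ g)) :
    rlKernel β ⋆ₗ g ≤ A • rlKernel (β + 1) + c • (rlKernel (β + α) ⋆ₗ g) := by
  have hK (γ : ℝ) : AEMeasurable (rlKernel γ) := (measurable_rlKernel γ).aemeasurable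
  have hKg : AEMeasurable (rlKernel α ⋆ₗ g) := aemeasurable_lconvolution (hK α) hg
  calc rlKernel β ⋆ₗ g
      ≤ rlKernel β ⋆ₗ (A • rlKernel 1 + c • (rlKernel α ⋆ₗ g)) := lconvolution_mono_right _ h
    _ = A • (rlKernel β ⋆ₗ rlKernel 1) + c • (rlKernel β ⋆ₗ (rlKernel α ⋆ₗ g)) := by
        rw [lconvolution_add (hK β) ((hK 1).const_smul A), lconvolution_const_smul (hK β) (hK 1),
          lconvolution_const_smul (hK β) hKg]
    _ = A • rlKernel (β + 1) + c • (rlKernel (β + α) ⋆ₗ g) := by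
        rw [lconvolution_assoc₀ (hK β) (hK α) hg, rlKernel_lconvolution_rlKernel hβ one_pos,
          rlKernel_lconvolution_rlKernel hβ hα]

lemma le_sum_add_pow_smul_lconvolution (hα : 0 < α) (hg : AEMeasurable g)
    (h : g ≤ A • rlKernel 1 + c • (rlKernel α ⋆ₗ g)) (n : ℕ) :
    g ≤ A • ∑ j ∈ Finset.range (n + 1), c ^ j • rlKernel (α * j + 1) +
      c ^ (n + 1) • (rlKernel (α * (n + 1 : ℕ)) ⋆ₗ g) := by
  induction n with
  | zero => simpa using h
  | succ n ih =>
    have hstep := rlKernel_lconvolution_le hα (β := α * (n + 1 : ℕ)) (by positivity) hg h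
    have hα_succ : α * (n + 1 : ℕ) + α = α * (n + 1 + 1 : ℕ) := by push_cast; ring
    rw [hα_succ] at hstep
    calc g ≤ A • ∑ j ∈ Finset.range (n + 1), c ^ j • rlKernel (α * j + 1) +
            c ^ (n + 1) • (rlKernel (α * (n + 1 : ℕ)) ⋆ₗ g) := ih
      _ ≤ A • ∑ j ∈ Finset.range (n + 1), c ^ j • rlKernel (α * j + 1) +
            c ^ (n + 1) • (A • rlKernel (α * (n + 1 : ℕ) + 1) +
              c • (rlKernel (α * (n + 1 + 1 : ℕ)) ⋆ₗ g)) := by gcongr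
      _ = A • ∑ j ∈ Finset.range (n + 1 + 1), c ^ j • rlKernel (α * j + 1) +
            c ^ (n + 1 + 1) • (rlKernel (α * (n + 1 + 1 : ℕ)) ⋆ₗ g) := by
          rw [Finset.sum_range_succ _ (n + 1), smul_add, smul_add, smul_smul, smul_smul, smul_smul,
            mul_comm A, ← pow_succ, ← add_assoc]

theorem le_mul_mittagLeffler_of_le_add_lconvolution (hα : 0 < α) (hl : 0 ≤ l) (ht : 0 < t)
    (hg : AEMeasurable g) (hg0 : ∀ s < 0, g s = 0) (hgi : ∫⁻ s, g s ≠ ∞)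
    (h : g ≤ A • rlKernel 1 + ENNReal.ofReal l • (rlKernel α ⋆ₗ g)) :
    g t ≤ A * ENNReal.ofReal (mittagLeffler α (l * t ^ α)) := by
  have hrem := (tendsto_add_atTop_iff_nat 1).2
    (tendsto_pow_mul_rlKernel_lconvolution hα hl ht hg hg0 hgi)
  have hlim := hrem.const_add (A * ENNReal.ofReal (mittagLeffler α (l * t ^ α)))
  rw [add_zero] at hlim
  refine ge_of_tendsto' hlim fun n => ?_
  refine (le_sum_add_pow_smul_lconvolution hα hg h n t).trans ?_
  simp only [Pi.add_apply, Pi.smul_apply, Finset.sum_apply, smul_eq_mul]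
  rw [← tsum_pow_mul_rlKernel_add_one hα hl ht]
  gcongr
  exact ENNReal.sum_le_tsum _

lemma ofReal_integral_rpow_mul_le_lconvolution (hα : 0 < α) {s : ℝ} (hs : s ∈ Icc 0 t)
    (x : ℝ → ℝ) :
    ENNReal.ofReal (∫ r in (0 : ℝ)..s, (s - r) ^ (α - 1) * x r) ≤
      ENNReal.ofReal (Real.Gamma α) *
        (rlKernel α ⋆ₗ (Ioc 0 t).indicator fun r => ENNReal.ofReal (x r)) s := by
  rw [intervalIntegral.integral_of_le hs.1, integral_Ioc_eq_integral_Ioo, lconvolution_comm,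
    lconvolution_def, ← lintegral_const_mul' _ _ ENNReal.ofReal_ne_top]
  refine (ofReal_integral_le_lintegral_ofReal _).trans ?_
  rw [← lintegral_indicator measurableSet_Ioo]
  refine lintegral_mono (indicator_le fun r hr => ?_)
  have hΓ := Real.Gamma_pos_of_pos hα
  have hsr : 0 < s - r := sub_pos.2 hr.2
  have hr_mem : r ∈ Ioc 0 t := ⟨hr.1, hr.2.le.trans hs.2⟩
  rw [indicator_of_mem hr_mem, neg_add_eq_sub, rlKernel_of_pos hsr, mul_left_comm,
    ← ENNReal.ofReal_mul hΓ.le, mul_div_cancel₀ _ hΓ.ne', mul_comm,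
    ENNReal.ofReal_mul' (by positivity)]

lemma indicator_ofReal_le_add_smul_lconvolution (hα : 0 < α) {a b x : ℝ → ℝ}
    (haMono : MonotoneOn a (Icc 0 t)) (hb0 : 0 ≤ b 0) (hbMono : MonotoneOn b (Icc 0 t))
    (hineq : ∀ s ∈ Icc 0 t, x s ≤ a s + b s * ∫ r in (0 : ℝ)..s, (s - r) ^ (α - 1) * x r) :
    ((Ioc 0 t).indicator fun s => ENNReal.ofReal (x s)) ≤
      ENNReal.ofReal (a t) • rlKernel 1 + ENNReal.ofReal (b t * Real.Gamma α) •
        (rlKernel α ⋆ₗ (Ioc 0 t).indicator fun s => ENNReal.ofReal (x s)) := by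
  refine indicator_le fun s hs => ?_
  set g : ℝ → ℝ≥0∞ := (Ioc 0 t).indicator fun s => ENNReal.ofReal (x s)
  have ht : 0 ≤ t := hs.1.le.trans hs.2
  have hs' : s ∈ Icc 0 t := Ioc_subset_Icc_self hs
  have ht' : t ∈ Icc 0 t := right_mem_Icc.2 ht
  have hb {r} (hr : r ∈ Icc 0 t) : 0 ≤ b r := hb0.trans (hbMono (left_mem_Icc.2 ht) hr hr.1)
  calc ENNReal.ofReal (x s)
      ≤ ENNReal.ofReal (a s) +
          ENNReal.ofReal (b s) * ENNReal.ofReal (∫ r in (0 : ℝ)..s, (s - r) ^ (α - 1) * x r) := by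
        rw [← ENNReal.ofReal_mul (hb hs')]
        exact (ENNReal.ofReal_le_ofReal (hineq s hs')).trans ENNReal.ofReal_add_le
    _ ≤ ENNReal.ofReal (a t) + ENNReal.ofReal (b t) *
          (ENNReal.ofReal (Real.Gamma α) * (rlKernel α ⋆ₗ g) s) := by
        gcongr
        exacts [haMono hs' ht' hs.2, hbMono hs' ht' hs.2,
          ofReal_integral_rpow_mul_le_lconvolution hα hs' x]
    _ = (ENNReal.ofReal (a t) • rlKernel 1 +
          ENNReal.ofReal (b t * Real.Gamma α) • (rlKernel α ⋆ₗ g)) s := by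
        simp [rlKernel_one_of_pos hs.1, ENNReal.ofReal_mul (hb ht'), mul_assoc]

end RiemannLiouville

theorem stmt_7_general {α t : ℝ} (hα : 0 < α) (ht : 0 ≤ t) {a b x : ℝ → ℝ}
    (ha0 : 0 ≤ a t) (haMono : MonotoneOn a (Icc 0 t))
    (hb0 : 0 ≤ b 0) (hbMono : MonotoneOn b (Icc 0 t))
    (hxInt : IntegrableOn x (Icc 0 t))
    (hineq : ∀ s ∈ Icc 0 t, x s ≤ a s + b s * ∫ r in (0 : ℝ)..s, (s - r) ^ (α - 1) * x r) :
    x t ≤ a t * mittagLeffler α (b t * Real.Gamma α * t ^ α) := by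
  have ht' : t ∈ Icc 0 t := right_mem_Icc.2 ht
  rcases ht.eq_or_lt with rfl | ht_pos
  · simpa [Real.zero_rpow hα.ne', mittagLeffler_zero] using hineq 0 ht'
  have hl : 0 ≤ b t * Real.Gamma α := by
    have hbt : 0 ≤ b t := hb0.trans (hbMono (left_mem_Icc.2 ht) ht' ht)
    positivity
  have hxInt' : IntegrableOn x (Ioc 0 t) := hxInt.mono_set Ioc_subset_Icc_self
  have hg : AEMeasurable ((Ioc 0 t).indicator fun s => ENNReal.ofReal (x s)) :=
    (aemeasurable_indicator_iff measurableSet_Ioc).2 hxInt'.aemeasurable.ennreal_ofReal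
  have hgi : ∫⁻ s, (Ioc 0 t).indicator (fun s => ENNReal.ofReal (x s)) s ≠ ∞ := by
    rw [lintegral_indicator measurableSet_Ioc]
    exact hxInt'.lintegral_lt_top.ne
  have hE := mittagLeffler_nonneg hα (mul_nonneg hl (Real.rpow_nonneg ht α))
  have hgt := le_mul_mittagLeffler_of_le_add_lconvolution hα hl ht_pos hg
    (fun s hs => indicator_of_notMem (fun h => h.1.not_gt hs) _) hgi
    (indicator_ofReal_le_add_smul_lconvolution hα haMono hb0 hbMono hineq)
  rwa [indicator_of_mem (right_mem_Ioc.2 ht_pos), ← ENNReal.ofReal_mul ha0,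
    ENNReal.ofReal_le_ofReal_iff (mul_nonneg ha0 hE)] at hgt

/-- Generalized fractional Gronwall inequality (Lemma 2.4): if a is nonnegative,
nondecreasing, locally integrable on [0,T), b is nonnegative, nondecreasing,
continuous with b ≤ M, x is nonnegative locally integrable and
x(t) ≤ a(t) + b(t)∫₀ᵗ(t−s)^{α−1}x(s)ds, then x(t) ≤ a(t)·E_α(b(t)Γ(α)t^α). -/
theorem stmt_7 (α T M : ℝ) (hα : 0 < α) (hT : 0 < T)
    (a b x : ℝ → ℝ)
    (ha0 : ∀ t ∈ Set.Ico (0:ℝ) T, 0 ≤ a t)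
    (haMono : MonotoneOn a (Set.Ico 0 T))
    (haInt : ∀ t ∈ Set.Ico (0:ℝ) T, IntegrableOn a (Set.Icc 0 t))
    (hb0 : ∀ t ∈ Set.Ico (0:ℝ) T, 0 ≤ b t)
    (hbMono : MonotoneOn b (Set.Ico 0 T))
    (hbCont : ContinuousOn b (Set.Ico 0 T))
    (hbM : ∀ t ∈ Set.Ico (0:ℝ) T, b t ≤ M)
    (hx0 : ∀ t ∈ Set.Ico (0:ℝ) T, 0 ≤ x t)
    (hxInt : ∀ t ∈ Set.Ico (0:ℝ) T, IntegrableOn x (Set.Icc 0 t))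
    (hineq : ∀ t ∈ Set.Ico (0:ℝ) T,
      x t ≤ a t + b t * ∫ s in (0:ℝ)..t, (t - s) ^ (α - 1) * x s) :
    ∀ t ∈ Set.Ico (0:ℝ) T,
      x t ≤ a t * mittagLeffler α (b t * Real.Gamma α * t ^ α) := fun t ht =>
    have hsub : Set.Icc 0 t ⊆ Set.Ico 0 T := Set.Icc_subset_Ico_right ht.2
    stmt_7_general hα ht.1 (ha0 t ht) (haMono.mono hsub) (hb0 0 ⟨le_rfl, hT⟩) (hbMono.mono hsub)
      (hxInt t ht) fun s hs => hineq s (hsub hs)
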